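/- Let s ≥ 1, let X be a metric arc with ‖X‖_{s-var} < ∞, and let f : [0,1] → X be a homeomorphism. Then the function t ↦ ‖f([0,t])‖_{s-var} is continuous on [0,1]. -/

import Mathlib

open scoped ENNReal

/-- `f` parametrizes the metric space `X` as an arc: `f` is a continuous injection
of the compact interval `[0,1]` onto `X` (equivalently, a homeomorphism from `[0,1]`
onto `X`). -/
def IsArcParam {X : Type*} [MetricSpace X] (f : ℝ → X) : Prop :=
  ContinuousOn f (Set.Icc 0 1) ∧ Set.InjOn f (Set.Icc 0 1) ∧ f '' Set.Icc 0 1 = Set.univ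

/-- `X` is a metric arc: there is a homeomorphism from `[0,1]` onto `X`. -/
def IsMetricArc (X : Type*) [MetricSpace X] : Prop :=
  ∃ f : ℝ → X, IsArcParam f

/-- `A` is a subarc of the metric arc `X`: the image of a closed subinterval of `[0,1]`
under a homeomorphism from `[0,1]` onto `X`. -/
def IsSubarc {X : Type*} [MetricSpace X] (A : Set X) : Prop :=
  ∃ (f : ℝ → X) (a b : ℝ), IsArcParam f ∧ 0 ≤ a ∧ a ≤ b ∧ b ≤ 1 ∧ A = f '' Set.Icc a b

/-- The interior of a subarc `A`, described intrinsically: the points of `A` whose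
removal disconnects `A`.  For `A = f '' [a,b]` (with `a < b`) this is exactly
`f '' (a,b)`, i.e. `A` without its two endpoints. -/
def arcInterior {X : Type*} [MetricSpace X] (A : Set X) : Set X :=
  {x | x ∈ A ∧ ¬ IsPreconnected (A \ {x})}

/-- A partition of the metric arc `X`: a finite collection of subarcs with pairwise
disjoint interiors whose union is `X`. -/
def IsArcPartition {X : Type*} [MetricSpace X] (P : Finset (Set X)) : Prop :=
  (∀ A ∈ P, IsSubarc A) ∧
    ((P : Set (Set X)).Pairwise fun A B => Disjoint (arcInterior A) (arcInterior B)) ∧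
    ⋃₀ (P : Set (Set X)) = Set.univ

/-- The `s`-variation `‖X‖_{s-var}` of `X`: the supremum over all partitions of `X`
of the sums `∑ (diam A)^s`. -/
noncomputable def sVariation (X : Type*) [MetricSpace X] (s : ℝ) : ℝ≥0∞ :=
  ⨆ (P : Finset (Set X)) (_ : IsArcPartition P), ∑ A ∈ P, EMetric.diam A ^ s

/-- `H_{1/s}(X)`: the infimum of all `H` for which there is a surjection
`f : [0,1] → X` with `edist (f x) (f y) ≤ H * (edist x y)^(1/s)`; it equals `∞`
if no such surjection exists. -/
noncomputable def holderConstant (X : Type*) [MetricSpace X] (s : ℝ) : ℝ≥0∞ :=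
  sInf {H : ℝ≥0∞ | ∃ f : ℝ → X, f '' Set.Icc 0 1 = Set.univ ∧
    ∀ x ∈ Set.Icc (0:ℝ) 1, ∀ y ∈ Set.Icc (0:ℝ) 1, edist (f x) (f y) ≤ H * edist x y ^ (1 / s)}

open Set Filter Topology

/-!
Every subarc realizes its diameter by a chord, so the variation of the arc `f([a,b])` is the
supremum `V(a,b)` of the sums `∑ d(f(l), f(r))^s` over packings of `[a,b]` by intervals `[l,r]`.
Such a sum depends continuously on the endpoints, hence `V` is lower semicontinuous in each of its
arguments. Put `F(t) = V(0,t)`, an increasing function; lower semicontinuity leaves only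
`F(x) → F(t)` as `x ↓ t` to be shown. By superadditivity `V(t,x) ≤ V(t,1) - V(x,1)`, and since
`V(t,1)` is finite, lower semicontinuity in the left endpoint forces `V(t,x) → 0`. Minkowski's
inequality `F(x)^(1/s) ≤ F(t)^(1/s) + V(t,x)^(1/s)` then concludes.
-/

section RpowVariation

variable {α β E : Type*} [LinearOrder α] [LinearOrder β] [PseudoEMetricSpace E]

/-- A finite family of nondegenerate, non-overlapping intervals with endpoints in `t`, encoded by
their pairs of endpoints. Non-overlapping means disjointness of the intervals `Ioc p.1 p.2` rather
than of the open ones, which may be empty when `α` is not densely ordered. -/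
structure IsIntervalPacking (P : Finset (α × α)) (t : Set α) : Prop where
  fst_mem : ∀ p ∈ P, p.1 ∈ t
  snd_mem : ∀ p ∈ P, p.2 ∈ t
  fst_lt_snd : ∀ p ∈ P, p.1 < p.2
  pairwiseDisjoint : (P : Set (α × α)).PairwiseDisjoint fun p => Ioc p.1 p.2

/-- The `s`-variation of a function `f` on a set `t`, computed from the values of `f` at the
endpoints of intervals. It generalizes `eVariationOn`, and takes packings in place of monotone
sequences so that a packing need not be completed to a subdivision. -/
noncomputable def rpowVariationOn (s : ℝ) (f : α → E) (t : Set α) : ℝ≥0∞ :=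
  ⨆ (P : Finset (α × α)) (_ : IsIntervalPacking P t), ∑ p ∈ P, edist (f p.1) (f p.2) ^ s

namespace IsIntervalPacking

variable {P Q : Finset (α × α)} {t u : Set α}

theorem empty (t : Set α) : IsIntervalPacking ∅ t := by
  constructor <;> simp

theorem mono (hP : IsIntervalPacking P t) (htu : t ⊆ u) : IsIntervalPacking P u where
  fst_mem p hp := htu (hP.fst_mem p hp)
  snd_mem p hp := htu (hP.snd_mem p hp)
  fst_lt_snd := hP.fst_lt_snd
  pairwiseDisjoint := hP.pairwiseDisjoint

theorem Icc_subset [ht : t.OrdConnected] (hP : IsIntervalPacking P t) {p : α × α} (hp : p ∈ P) :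
    Icc p.1 p.2 ⊆ t :=
  ht.out (hP.fst_mem p hp) (hP.snd_mem p hp)

theorem snd_le_fst_or_snd_le_fst (hP : IsIntervalPacking P t) {p q : α × α} (hp : p ∈ P)
    (hq : q ∈ P) (hpq : p ≠ q) : p.2 ≤ q.1 ∨ q.2 ≤ p.1 := by
  have := Ioc_disjoint_Ioc.1 (hP.pairwiseDisjoint hp hq hpq)
  have := hP.fst_lt_snd p hp
  have := hP.fst_lt_snd q hq
  grind

theorem union [DecidableEq α] (hP : IsIntervalPacking P t) (hQ : IsIntervalPacking Q u)
    (h : ∀ x ∈ t, ∀ y ∈ u, x ≤ y) : IsIntervalPacking (P ∪ Q) (t ∪ u) where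
  fst_mem p hp := (Finset.mem_union.1 hp).imp (hP.fst_mem p) (hQ.fst_mem p)
  snd_mem p hp := (Finset.mem_union.1 hp).imp (hP.snd_mem p) (hQ.snd_mem p)
  fst_lt_snd p hp := (Finset.mem_union.1 hp).elim (hP.fst_lt_snd p) (hQ.fst_lt_snd p)
  pairwiseDisjoint := by
    rw [Finset.coe_union, pairwiseDisjoint_union]
    refine ⟨hP.pairwiseDisjoint, hQ.pairwiseDisjoint, fun p hp q hq _ => Ioc_disjoint_Ioc.2 ?_⟩
    exact (min_le_left _ _).trans ((h _ (hP.snd_mem p hp) _ (hQ.fst_mem q hq)).trans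
      (le_max_right _ _))

theorem disjoint_of_forall_le (hP : IsIntervalPacking P t) (hQ : IsIntervalPacking Q u)
    (h : ∀ x ∈ t, ∀ y ∈ u, x ≤ y) : Disjoint P Q :=
  Finset.disjoint_left.2 fun p hpP hpQ =>
    (hP.fst_lt_snd p hpP).not_ge (h _ (hP.snd_mem p hpP) _ (hQ.fst_mem p hpQ))

end IsIntervalPacking

namespace rpowVariationOn

variable {s : ℝ} {f g : α → E} {t u : Set α} {a b c : α}

theorem sum_le_of_isIntervalPacking {P : Finset (α × α)} (hP : IsIntervalPacking P t) :
    ∑ p ∈ P, edist (f p.1) (f p.2) ^ s ≤ rpowVariationOn s f t :=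
  le_iSup₂ (f := fun (P : Finset (α × α)) (_ : IsIntervalPacking P t) =>
    ∑ p ∈ P, edist (f p.1) (f p.2) ^ s) P hP

theorem sum_le_of_pairwiseDisjoint (hs : 0 < s) {ι : Type*} {I : Finset ι} {l r : ι → α}
    (hl : ∀ i ∈ I, l i ∈ t) (hr : ∀ i ∈ I, r i ∈ t) (hlr : ∀ i ∈ I, l i ≤ r i)
    (hdisj : (I : Set ι).PairwiseDisjoint fun i => Ioc (l i) (r i)) :
    ∑ i ∈ I, edist (f (l i)) (f (r i)) ^ s ≤ rpowVariationOn s f t := by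
  classical
  have hdrop : ∀ i ∈ I, edist (f (l i)) (f (r i)) ^ s ≠ 0 → l i < r i := fun i hi hne =>
    (hlr i hi).lt_of_ne fun heq => hne (by simp [heq, hs])
  have hinj : InjOn (fun i => (l i, r i)) (I.filter fun i => l i < r i) := by
    simp only [Finset.coe_filter]
    rintro i ⟨hi, hlti⟩ j ⟨hj, -⟩ hij
    rw [Prod.mk.injEq] at hij
    exact hdisj.elim_set hi hj (r i) (right_mem_Ioc.2 hlti)
      (by rw [← hij.1, ← hij.2]; exact right_mem_Ioc.2 hlti)
  rw [← Finset.sum_filter_of_ne hdrop,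
    ← Finset.sum_image (f := fun p : α × α => edist (f p.1) (f p.2) ^ s) hinj]
  apply sum_le_of_isIntervalPacking
  constructor
  · exact Finset.forall_mem_image.2 fun i hi => hl i (Finset.mem_of_mem_filter i hi)
  · exact Finset.forall_mem_image.2 fun i hi => hr i (Finset.mem_of_mem_filter i hi)
  · exact Finset.forall_mem_image.2 fun i hi => (Finset.mem_filter.1 hi).2
  · rw [Finset.coe_image, hinj.pairwiseDisjoint_image]
    exact hdisj.subset (Finset.coe_subset.2 (Finset.filter_subset _ I))

theorem congr (hfg : EqOn f g t) : rpowVariationOn s f t = rpowVariationOn s g t := by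
  refine iSup_congr fun P => iSup_congr fun hP => Finset.sum_congr rfl fun p hp => ?_
  rw [hfg (hP.fst_mem p hp), hfg (hP.snd_mem p hp)]

theorem mono (htu : t ⊆ u) : rpowVariationOn s f t ≤ rpowVariationOn s f u :=
  iSup₂_le fun _ hP => sum_le_of_isIntervalPacking (hP.mono htu)

theorem eq_zero_of_subsingleton (ht : t.Subsingleton) : rpowVariationOn s f t = 0 := by
  simp only [rpowVariationOn, ENNReal.iSup_eq_zero]
  refine fun P hP => Finset.sum_eq_zero fun p hp => ?_
  exact absurd (ht (hP.fst_mem p hp) (hP.snd_mem p hp)) (hP.fst_lt_snd p hp).ne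

theorem comp_le_of_monotoneOn (hs : 0 < s) {φ : β → α} {v : Set β} (hφ : MonotoneOn φ v)
    (hmaps : MapsTo φ v t) : rpowVariationOn s (f ∘ φ) v ≤ rpowVariationOn s f t := by
  refine iSup₂_le fun P hP => sum_le_of_pairwiseDisjoint hs
    (fun p hp => hmaps (hP.fst_mem p hp)) (fun p hp => hmaps (hP.snd_mem p hp))
    (fun p hp => hφ (hP.fst_mem p hp) (hP.snd_mem p hp) (hP.fst_lt_snd p hp).le)
    fun p hp q hq hpq => Ioc_disjoint_Ioc.2 ?_
  rcases hP.snd_le_fst_or_snd_le_fst hp hq hpq with h | h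
  · exact min_le_of_left_le (le_max_of_le_right (hφ (hP.snd_mem p hp) (hP.fst_mem q hq) h))
  · exact min_le_of_right_le (le_max_of_le_left (hφ (hP.snd_mem q hq) (hP.fst_mem p hp) h))

theorem comp_eq_of_monotoneOn (hs : 0 < s) {φ : β → α} {v : Set β} (hφ : MonotoneOn φ v) :
    rpowVariationOn s (f ∘ φ) v = rpowVariationOn s f (φ '' v) := by
  apply le_antisymm (comp_le_of_monotoneOn hs hφ (mapsTo_image φ v))
  cases isEmpty_or_nonempty β
  · simp [Set.eq_empty_of_isEmpty, eq_zero_of_subsingleton]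
  have hinv : RightInvOn (φ.invFunOn v) φ (φ '' v) := (surjOn_image φ v).rightInvOn_invFunOn
  have hmaps : MapsTo (φ.invFunOn v) (φ '' v) v := (surjOn_image φ v).mapsTo_invFunOn
  calc rpowVariationOn s f (φ '' v)
      = rpowVariationOn s ((f ∘ φ) ∘ φ.invFunOn v) (φ '' v) :=
        congr fun x hx => congrArg f (hinv hx).symm
    _ ≤ rpowVariationOn s (f ∘ φ) v := comp_le_of_monotoneOn hs
        (Function.monotoneOn_of_rightInvOn_of_mapsTo hφ hinv hmaps) hmaps

theorem add_le_union (h : ∀ x ∈ t, ∀ y ∈ u, x ≤ y) :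
    rpowVariationOn s f t + rpowVariationOn s f u ≤ rpowVariationOn s f (t ∪ u) := by
  classical
  refine ENNReal.biSup_add_biSup_le' ⟨∅, .empty t⟩ ⟨∅, .empty u⟩ fun P hP Q hQ => ?_
  rw [← Finset.sum_union (hP.disjoint_of_forall_le hQ h)]
  exact sum_le_of_isIntervalPacking (hP.union hQ h)

theorem Icc_add_Icc_le (hab : a ≤ b) (hbc : b ≤ c) :
    rpowVariationOn s f (Icc a b) + rpowVariationOn s f (Icc b c)
      ≤ rpowVariationOn s f (Icc a c) := by
  rw [← Icc_union_Icc_eq_Icc hab hbc]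
  exact add_le_union fun x hx y hy => hx.2.trans hy.1

/- Clamping to either side of `b` splits every chord at `f b`, so the triangle inequality reduces
the claim to Minkowski's inequality for the resulting sums. -/
theorem rpow_union_le (hs : 1 ≤ s) (ht : IsGreatest t b) (hu : IsLeast u b) :
    rpowVariationOn s f (t ∪ u) ^ (1 / s)
      ≤ rpowVariationOn s f t ^ (1 / s) + rpowVariationOn s f u ^ (1 / s) := by
  have hs0 : 0 < s := one_pos.trans_le hs
  have hleft : rpowVariationOn s (f ∘ (min · b)) (t ∪ u) ≤ rpowVariationOn s f t := by
    refine comp_le_of_monotoneOn hs0 (fun _ _ _ _ h => min_le_min_right b h) ?_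
    rintro x (hx | hx)
    · simpa [ht.2 hx] using hx
    · simpa [hu.2 hx] using ht.1
  have hright : rpowVariationOn s (f ∘ (max · b)) (t ∪ u) ≤ rpowVariationOn s f u := by
    refine comp_le_of_monotoneOn hs0 (fun _ _ _ _ h => max_le_max_right b h) ?_
    rintro x (hx | hx)
    · simpa [ht.2 hx] using hu.1
    · simpa [hu.2 hx] using hx
  have hchord : ∀ x y, edist (f x) (f y)
      ≤ edist (f (min x b)) (f (min y b)) + edist (f (max x b)) (f (max y b)) := fun x y => by
    rcases le_total x b with hx | hx <;> rcases le_total y b with hy | hy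
    · simp [hx, hy]
    · simpa [hx, hy] using edist_triangle (f x) (f b) (f y)
    · simpa [hx, hy, add_comm] using edist_triangle (f x) (f b) (f y)
    · simp [hx, hy]
  rw [one_div, ENNReal.rpow_inv_le_iff hs0, ← one_div]
  refine iSup₂_le fun P hP => ?_
  rw [← ENNReal.rpow_inv_le_iff hs0, ← one_div]
  calc (∑ p ∈ P, edist (f p.1) (f p.2) ^ s) ^ (1 / s)
      ≤ (∑ p ∈ P, (edist (f (min p.1 b)) (f (min p.2 b))
          + edist (f (max p.1 b)) (f (max p.2 b))) ^ s) ^ (1 / s) := by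
        gcongr
        exact hchord _ _
    _ ≤ (∑ p ∈ P, edist (f (min p.1 b)) (f (min p.2 b)) ^ s) ^ (1 / s)
          + (∑ p ∈ P, edist (f (max p.1 b)) (f (max p.2 b)) ^ s) ^ (1 / s) :=
        ENNReal.Lp_add_le _ _ _ hs
    _ ≤ rpowVariationOn s f t ^ (1 / s) + rpowVariationOn s f u ^ (1 / s) := by
        gcongr
        · exact (sum_le_of_isIntervalPacking hP).trans hleft
        · exact (sum_le_of_isIntervalPacking hP).trans hright

theorem rpow_Icc_le (hs : 1 ≤ s) (hab : a ≤ b) (hbc : b ≤ c) :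
    rpowVariationOn s f (Icc a c) ^ (1 / s)
      ≤ rpowVariationOn s f (Icc a b) ^ (1 / s) + rpowVariationOn s f (Icc b c) ^ (1 / s) := by
  rw [← Icc_union_Icc_eq_Icc hab hbc]
  exact rpow_union_le hs (isGreatest_Icc hab) (isLeast_Icc hbc)

theorem eventually_lt_of_tendsto {ι : Type*} {l : Filter ι} {F : ι → α → E}
    (hF : ∀ x ∈ t, Tendsto (F · x) l (𝓝 (f x))) {r : ℝ≥0∞} (hr : r < rpowVariationOn s f t) :
    ∀ᶠ i in l, r < rpowVariationOn s (F i) t := by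
  simp only [rpowVariationOn, lt_iSup_iff] at hr
  obtain ⟨P, hP, hr⟩ := hr
  have hsum : Tendsto (fun i => ∑ p ∈ P, edist (F i p.1) (F i p.2) ^ s) l
      (𝓝 (∑ p ∈ P, edist (f p.1) (f p.2) ^ s)) := tendsto_finsetSum _ fun p hp =>
    ((hF _ (hP.fst_mem p hp)).edist (hF _ (hP.snd_mem p hp))).ennrpow_const s
  filter_upwards [hsum.eventually_const_lt hr] with i hi
  exact hi.trans_le (sum_le_of_isIntervalPacking hP)

section Continuity

variable [TopologicalSpace α] [OrderClosedTopology α]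

/- The clamped functions `y ↦ f (min y x)` all live on the fixed interval `Icc a c` and converge
pointwise to `f` there, so lower semicontinuity in the function gives it in the endpoint. -/
theorem eventually_lt_Icc_right (hs : 0 < s) (hf : ContinuousOn f (Icc a b)) (hc : c ∈ Icc a b)
    {r : ℝ≥0∞} (hr : r < rpowVariationOn s f (Icc a c)) :
    ∀ᶠ x in 𝓝[Icc a b] c, r < rpowVariationOn s f (Icc a x) := by
  have hclamp : ∀ y ∈ Icc a c,
      Tendsto (fun x => f (min y x)) (𝓝[Icc a b] c) (𝓝 (f y)) := fun y hy => by
    have hcont : ContinuousOn (fun x => f (min y x)) (Icc a b) :=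
      hf.comp (by fun_prop) fun x hx => ⟨le_min hy.1 hx.1, min_le_of_right_le hx.2⟩
    simpa [ContinuousWithinAt, hy.2] using hcont c hc
  filter_upwards [self_mem_nhdsWithin, eventually_lt_of_tendsto hclamp hr] with x hx hlt
  exact hlt.trans_le (comp_le_of_monotoneOn hs (fun _ _ _ _ h => min_le_min_right x h)
    fun y hy => ⟨le_min hy.1 hx.1, min_le_right y x⟩)

theorem eventually_lt_Icc_left (hs : 0 < s) (hf : ContinuousOn f (Icc a b)) (hc : c ∈ Icc a b)
    {r : ℝ≥0∞} (hr : r < rpowVariationOn s f (Icc c b)) :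
    ∀ᶠ x in 𝓝[Icc a b] c, r < rpowVariationOn s f (Icc x b) := by
  have hclamp : ∀ y ∈ Icc c b,
      Tendsto (fun x => f (max y x)) (𝓝[Icc a b] c) (𝓝 (f y)) := fun y hy => by
    have hcont : ContinuousOn (fun x => f (max y x)) (Icc a b) :=
      hf.comp (by fun_prop) fun x hx => ⟨le_max_of_le_right hx.1, max_le hy.2 hx.2⟩
    simpa [ContinuousWithinAt, hy.1] using hcont c hc
  filter_upwards [self_mem_nhdsWithin, eventually_lt_of_tendsto hclamp hr] with x hx hlt
  exact hlt.trans_le (comp_le_of_monotoneOn hs (fun _ _ _ _ h => max_le_max_right x h)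
    fun y hy => ⟨le_max_right y x, max_le hy.2 hx.2⟩)

theorem tendsto_Icc_right_zero (hs : 0 < s) (hf : ContinuousOn f (Icc a b))
    (hfin : rpowVariationOn s f (Icc a b) ≠ ⊤) :
    Tendsto (fun x => rpowVariationOn s f (Icc a x)) (𝓝[Icc a b] a) (𝓝 0) := by
  refine ENNReal.tendsto_nhds_zero.2 fun ε hε => ?_
  rcases eq_or_ne (rpowVariationOn s f (Icc a b)) 0 with h0 | h0
  · filter_upwards [self_mem_nhdsWithin] with x hx
    exact (mono (Icc_subset_Icc_right hx.2)).trans (by simp [h0])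
  have hab : a ≤ b := by
    by_contra hab
    exact h0 (eq_zero_of_subsingleton (by simp [Icc_eq_empty hab]))
  filter_upwards [self_mem_nhdsWithin, eventually_lt_Icc_left hs hf (left_mem_Icc.2 hab)
    (ENNReal.sub_lt_self hfin h0 hε.ne')] with x hx hlt
  have hfin' : rpowVariationOn s f (Icc x b) ≠ ⊤ :=
    ne_top_of_le_ne_top hfin (mono (Icc_subset_Icc_left hx.1))
  refine (ENNReal.add_le_add_iff_right hfin').1 ?_
  calc rpowVariationOn s f (Icc a x) + rpowVariationOn s f (Icc x b)
      ≤ rpowVariationOn s f (Icc a b) := Icc_add_Icc_le hx.1 hx.2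
    _ ≤ ε + rpowVariationOn s f (Icc x b) := tsub_le_iff_left.1 hlt.le

theorem eventually_Icc_right_lt (hs : 1 ≤ s) (hf : ContinuousOn f (Icc a b)) (hca : c ≤ a)
    (hfin : rpowVariationOn s f (Icc a b) ≠ ⊤) {r : ℝ≥0∞}
    (hr : rpowVariationOn s f (Icc c a) < r) :
    ∀ᶠ x in 𝓝[Icc a b] a, rpowVariationOn s f (Icc c x) < r := by
  have hs0 : 0 < s := one_pos.trans_le hs
  have hs1 : 0 < 1 / s := one_div_pos.2 hs0
  have hbound : Tendsto (fun x => rpowVariationOn s f (Icc c a) ^ (1 / s)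
      + rpowVariationOn s f (Icc a x) ^ (1 / s)) (𝓝[Icc a b] a)
      (𝓝 (rpowVariationOn s f (Icc c a) ^ (1 / s))) := by
    simpa only [ENNReal.zero_rpow_of_pos hs1, add_zero] using
      ((tendsto_Icc_right_zero hs0 hf hfin).ennrpow_const (1 / s)).const_add
        (rpowVariationOn s f (Icc c a) ^ (1 / s))
  filter_upwards [self_mem_nhdsWithin,
    hbound.eventually_lt_const (ENNReal.rpow_lt_rpow hr hs1)] with x hx hlt
  exact (ENNReal.rpow_lt_rpow_iff hs1).1 ((rpow_Icc_le hs hca hx.1).trans_lt hlt)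

theorem continuousOn_Icc_right (hs : 1 ≤ s) (hf : ContinuousOn f (Icc a b))
    (hfin : rpowVariationOn s f (Icc a b) ≠ ⊤) :
    ContinuousOn (fun x => rpowVariationOn s f (Icc a x)) (Icc a b) := by
  refine fun c hc => tendsto_order.2
    ⟨fun r hr => eventually_lt_Icc_right (one_pos.trans_le hs) hf hc hr, fun r hr => ?_⟩
  rw [← Icc_union_Icc_eq_Icc hc.1 hc.2, nhdsWithin_union, eventually_sup]
  constructor
  · filter_upwards [self_mem_nhdsWithin] with x hx
    exact (mono (Icc_subset_Icc_right hx.2)).trans_lt hr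
  · have hsub : Icc c b ⊆ Icc a b := Icc_subset_Icc_left hc.1
    exact eventually_Icc_right_lt hs (hf.mono hsub) hc.1
      (ne_top_of_le_ne_top hfin (mono hsub)) hr

end Continuity

end rpowVariationOn

end RpowVariation

section ConsecutivePairs

variable {α : Type*} [LinearOrder α] {F : Finset α} {a b x : α}

/-- The gaps of a finite set `F`: pairs of successive elements of `F`. They are the intervals of
the subdivision with division points `F`. -/
def consecutivePairs (F : Finset α) : Finset (α × α) :=
  {p ∈ F ×ˢ F | p.1 < p.2 ∧ ∀ z ∈ F, z ≤ p.1 ∨ p.2 ≤ z}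

theorem mem_consecutivePairs {p : α × α} :
    p ∈ consecutivePairs F ↔
      (p.1 ∈ F ∧ p.2 ∈ F) ∧ p.1 < p.2 ∧ ∀ z ∈ F, z ≤ p.1 ∨ p.2 ≤ z := by
  rw [consecutivePairs, Finset.mem_filter, Finset.mem_product]

theorem isIntervalPacking_consecutivePairs (F : Finset α) :
    IsIntervalPacking (consecutivePairs F) (F : Set α) where
  fst_mem p hp := (mem_consecutivePairs.1 hp).1.1
  snd_mem p hp := (mem_consecutivePairs.1 hp).1.2
  fst_lt_snd p hp := (mem_consecutivePairs.1 hp).2.1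
  pairwiseDisjoint := fun p hp q hq hpq => by
    obtain ⟨⟨hp1, hp2⟩, -, hpF⟩ := mem_consecutivePairs.1 hp
    obtain ⟨⟨hq1, hq2⟩, -, hqF⟩ := mem_consecutivePairs.1 hq
    refine Set.disjoint_left.2 fun x hxp hxq => hpq (Prod.ext ?_ ?_)
    · exact le_antisymm ((hqF _ hp1).resolve_right (hxp.1.trans_le hxq.2).not_ge)
        ((hpF _ hq1).resolve_right (hxq.1.trans_le hxp.2).not_ge)
    · exact le_antisymm ((hpF _ hq2).resolve_left (hxp.1.trans_le hxq.2).not_ge)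
        ((hqF _ hp2).resolve_left (hxq.1.trans_le hxp.2).not_ge)

theorem exists_mem_consecutivePairs_of_isLowerSet {L : Set α} (hL : IsLowerSet L) (ha : a ∈ F)
    (haL : a ∈ L) (hb : b ∈ F) (hbL : b ∉ L) :
    ∃ p ∈ consecutivePairs F, p.1 ∈ L ∧ p.2 ∉ L := by
  classical
  obtain ⟨l, hl, hlmax⟩ := (F.filter (· ∈ L)).exists_max_image id
    ⟨a, Finset.mem_filter.2 ⟨ha, haL⟩⟩
  obtain ⟨r, hr, hrmin⟩ := (F.filter (· ∉ L)).exists_min_image id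
    ⟨b, Finset.mem_filter.2 ⟨hb, hbL⟩⟩
  rw [Finset.mem_filter] at hl hr
  have hlr : l < r := lt_of_not_ge fun hrl => hr.2 (hL hrl hl.2)
  refine ⟨(l, r), mem_consecutivePairs.2 ⟨⟨hl.1, hr.1⟩, hlr, fun z hz => ?_⟩, hl.2, hr.2⟩
  by_cases hzL : z ∈ L
  · exact .inl (hlmax z (Finset.mem_filter.2 ⟨hz, hzL⟩))
  · exact .inr (hrmin z (Finset.mem_filter.2 ⟨hz, hzL⟩))

theorem exists_mem_consecutivePairs_mem_Icc (ha : a ∈ F) (hb : b ∈ F) (hab : a < b)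
    (hx : x ∈ Icc a b) : ∃ p ∈ consecutivePairs F, x ∈ Icc p.1 p.2 := by
  rcases hx.1.eq_or_lt with rfl | hax
  · obtain ⟨p, hp, h1, h2⟩ := exists_mem_consecutivePairs_of_isLowerSet (isLowerSet_Iic a) ha
      self_mem_Iic hb hab.not_ge
    exact ⟨p, hp, h1, (not_le.1 h2).le⟩
  · obtain ⟨p, hp, h1, h2⟩ := exists_mem_consecutivePairs_of_isLowerSet (isLowerSet_Iio x) ha hax
      hb hx.2.not_gt
    exact ⟨p, hp, le_of_lt h1, not_lt.1 h2⟩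

theorem IsIntervalPacking.subset_consecutivePairs {P : Finset (α × α)}
    (hP : IsIntervalPacking P (Icc a b)) :
    P ⊆ consecutivePairs ({a, b} ∪ (P.image Prod.fst ∪ P.image Prod.snd)) := by
  intro p hp
  refine mem_consecutivePairs.2 ⟨⟨?_, ?_⟩, hP.fst_lt_snd p hp, fun z hz => ?_⟩
  · simp [Finset.mem_image_of_mem Prod.fst hp]
  · simp [Finset.mem_image_of_mem Prod.snd hp]
  simp only [Finset.mem_union, Finset.mem_insert, Finset.mem_singleton, Finset.mem_image] at hz
  obtain (rfl | rfl) | ⟨q, hq, rfl⟩ | ⟨q, hq, rfl⟩ := hz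
  · exact .inl (hP.fst_mem p hp).1
  · exact .inr (hP.snd_mem p hp).2
  all_goals
    rcases eq_or_ne p q with rfl | hpq
    · simp
    · have := hP.fst_lt_snd q hq
      have := hP.snd_le_fst_or_snd_le_fst hp hq hpq
      grind

theorem IsIntervalPacking.exists_superset_cover {P : Finset (α × α)}
    (hP : IsIntervalPacking P (Icc a b)) (hab : a < b) :
    ∃ Q, P ⊆ Q ∧ IsIntervalPacking Q (Icc a b) ∧ Icc a b ⊆ ⋃ p ∈ Q, Icc p.1 p.2 := by
  set F : Finset α := {a, b} ∪ (P.image Prod.fst ∪ P.image Prod.snd) with hF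
  refine ⟨consecutivePairs F, hP.subset_consecutivePairs,
    (isIntervalPacking_consecutivePairs F).mono ?_, ?_⟩
  · intro z hz
    simp only [hF, Finset.coe_union, Finset.coe_insert, Finset.coe_singleton,
      Finset.coe_image] at hz
    obtain (rfl | rfl) | ⟨p, hp, rfl⟩ | ⟨p, hp, rfl⟩ := hz
    · exact left_mem_Icc.2 hab.le
    · exact right_mem_Icc.2 hab.le
    · exact hP.fst_mem p hp
    · exact hP.snd_mem p hp
  · intro x hx
    obtain ⟨p, hp, hxp⟩ := exists_mem_consecutivePairs_mem_Icc (F := F) (by simp [hF])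
      (by simp [hF]) hab hx
    exact mem_biUnion hp hxp

end ConsecutivePairs

section Topology

theorem isPreconnected_image_iff_of_isCompact {X Y : Type*} [TopologicalSpace X]
    [TopologicalSpace Y] [T2Space Y] {f : X → Y} {K T : Set X} (hK : IsCompact K)
    (hf : ContinuousOn f K) (hinj : InjOn f K) (hT : T ⊆ K) :
    IsPreconnected (f '' T) ↔ IsPreconnected T := by
  have : CompactSpace K := isCompact_iff_compactSpace.1 hK
  have hemb := hf.domRestrict.isClosedEmbedding hinj.injective
  rw [← inter_eq_left.2 hT, ← image_domRestrict, hemb.isInducing.isPreconnected_image,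
    ← IsInducing.subtypeVal.isPreconnected_image, Subtype.image_preimage_coe, inter_comm]

theorem exists_edist_eq_ediam_of_isCompact {X : Type*} [PseudoEMetricSpace X] {A : Set X}
    (hA : IsCompact A) (hne : A.Nonempty) :
    ∃ x ∈ A, ∃ y ∈ A, edist x y = Metric.ediam A := by
  obtain ⟨⟨x, y⟩, ⟨hx, hy⟩, hmax⟩ :=
    (hA.prod hA).exists_isMaxOn (hne.prod hne) continuous_edist.continuousOn
  exact ⟨x, hx, y, hy, (Metric.edist_le_ediam_of_mem hx hy).antisymm
    (Metric.ediam_le fun z hz w hw => hmax (mk_mem_prod hz hw))⟩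

theorem ordConnected_Icc_sdiff_singleton_iff {α : Type*} [PartialOrder α] {a b m : α}
    (hm : m ∈ Icc a b) : (Icc a b \ {m}).OrdConnected ↔ m = a ∨ m = b := by
  constructor
  · intro hord
    by_contra! hne
    have hab := hm.1.trans hm.2
    exact (hord.out ⟨left_mem_Icc.2 hab, hne.1.symm⟩ ⟨right_mem_Icc.2 hab, hne.2.symm⟩ hm).2 rfl
  · rintro (rfl | rfl)
    · rw [Icc_sdiff_left]
      exact ordConnected_Ioc
    · rw [Icc_sdiff_right]
      exact ordConnected_Ico

end Topology

section Arc

variable {X : Type*} [MetricSpace X] {f : ℝ → X} {s a b : ℝ} {A : Set X}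

theorem IsArcParam.isPreconnected_image_iff (hf : IsArcParam f) {T : Set ℝ} (hT : T ⊆ Icc 0 1) :
    IsPreconnected (f '' T) ↔ T.OrdConnected := by
  rw [isPreconnected_image_iff_of_isCompact isCompact_Icc hf.1 hf.2.1 hT,
    isPreconnected_iff_ordConnected]

theorem IsArcParam.arcInterior_image_Icc (hf : IsArcParam f) (hab : Icc a b ⊆ Icc 0 1) :
    arcInterior (f '' Icc a b) = f '' Ioo a b := by
  have hcut : ∀ m ∈ Icc a b, f m ∈ arcInterior (f '' Icc a b) ↔ m ∈ Ioo a b := fun m hm => by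
    have himage : f '' Icc a b \ {f m} = f '' (Icc a b \ {m}) := by
      rw [(hf.2.1.mono hab).image_sdiff_subset (singleton_subset_iff.2 hm), image_singleton]
    simp only [arcInterior, mem_ofPred_eq, mem_image_of_mem f hm, true_and, himage,
      hf.isPreconnected_image_iff (sdiff_subset.trans hab), not_or,
      ordConnected_Icc_sdiff_singleton_iff hm]
    exact ⟨fun h => ⟨hm.1.lt_of_ne' h.1, hm.2.lt_of_ne h.2⟩, fun h => ⟨h.1.ne', h.2.ne⟩⟩
  apply Subset.antisymm
  · rintro _ hx
    obtain ⟨m, hm, rfl⟩ := hx.1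
    exact mem_image_of_mem f ((hcut m hm).1 hx)
  · rintro _ ⟨m, hm, rfl⟩
    exact (hcut m (Ioo_subset_Icc_self hm)).2 hm

theorem IsArcParam.exists_image_Icc_eq (hf : IsArcParam f) (hcomp : IsCompact A)
    (hconn : IsConnected A) : ∃ a b, a ≤ b ∧ Icc a b ⊆ Icc 0 1 ∧ f '' Icc a b = A := by
  set T := Icc 0 1 ∩ f ⁻¹' A
  have himage : f '' T = A := by rw [image_inter_preimage, hf.2.2, univ_inter]
  have hT : T ⊆ Icc 0 1 := inter_subset_left
  have hTcomp : IsCompact T := isCompact_Icc.of_isClosed_subset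
    (hf.1.preimage_isClosed_of_isClosed isClosed_Icc hcomp.isClosed) hT
  have hTne : T.Nonempty := image_nonempty.1 (himage ▸ hconn.nonempty)
  have hTord : T.OrdConnected :=
    (hf.isPreconnected_image_iff hT).1 (himage ▸ hconn.isPreconnected)
  have hTeq := eq_Icc_of_connected_compact ⟨hTne, hTord.isPreconnected⟩ hTcomp
  exact ⟨sInf T, sSup T, nonempty_Icc.1 (hTeq ▸ hTne), hTeq ▸ hT, by rw [← hTeq, himage]⟩

theorem IsSubarc.isCompact (hA : IsSubarc A) : IsCompact A := by
  obtain ⟨g, a, b, hg, ha, -, hb, rfl⟩ := hA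
  exact isCompact_Icc.image_of_continuousOn (hg.1.mono (Icc_subset_Icc ha hb))

theorem IsSubarc.isConnected (hA : IsSubarc A) : IsConnected A := by
  obtain ⟨g, a, b, hg, ha, hab, hb, rfl⟩ := hA
  exact (isConnected_Icc hab).image g (hg.1.mono (Icc_subset_Icc ha hb))

theorem IsSubarc.exists_edist_eq_ediam (hA : IsSubarc A) (hf : IsArcParam f) :
    ∃ u ∈ Icc (0 : ℝ) 1, ∃ v ∈ Icc (0 : ℝ) 1, u ≤ v ∧ f '' Ioo u v ⊆ arcInterior A ∧
      edist (f u) (f v) = Metric.ediam A := by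
  obtain ⟨c, d, -, hcd, rfl⟩ := hf.exists_image_Icc_eq hA.isCompact hA.isConnected
  obtain ⟨_, ⟨u, hu, rfl⟩, _, ⟨v, hv, rfl⟩, hediam⟩ :=
    exists_edist_eq_ediam_of_isCompact hA.isCompact hA.isConnected.nonempty
  rw [hf.arcInterior_image_Icc hcd]
  rcases le_total u v with huv | hvu
  · exact ⟨u, hcd hu, v, hcd hv, huv, image_mono (Ioo_subset_Ioo hu.1 hv.2), hediam⟩
  · exact ⟨v, hcd hv, u, hcd hu, hvu, image_mono (Ioo_subset_Ioo hv.1 hu.2),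
      (edist_comm _ _).trans hediam⟩

theorem IsArcParam.isArcPartition_image [DecidableEq (Set X)] (hf : IsArcParam f)
    {Q : Finset (ℝ × ℝ)} (hQ : IsIntervalPacking Q (Icc 0 1))
    (hcover : Icc 0 1 ⊆ ⋃ p ∈ Q, Icc p.1 p.2) :
    IsArcPartition (Q.image fun p => f '' Icc p.1 p.2) := by
  refine ⟨Finset.forall_mem_image.2 fun p hp => ?_, ?_, ?_⟩
  · exact ⟨f, p.1, p.2, hf, (hQ.fst_mem p hp).1, (hQ.fst_lt_snd p hp).le,
      (hQ.snd_mem p hp).2, rfl⟩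
  · rw [Finset.coe_image]
    rintro _ ⟨p, hp, rfl⟩ _ ⟨q, hq, rfl⟩ hne
    have hdisj : Disjoint (Ioo p.1 p.2) (Ioo q.1 q.2) :=
      (hQ.pairwiseDisjoint hp hq fun hpq => hne (by rw [hpq])).mono
        Ioo_subset_Ioc_self Ioo_subset_Ioc_self
    simp only [hf.arcInterior_image_Icc (hQ.Icc_subset hp),
      hf.arcInterior_image_Icc (hQ.Icc_subset hq)]
    rw [disjoint_iff_inter_eq_empty, ← hf.2.1.image_inter
      (Ioo_subset_Icc_self.trans (hQ.Icc_subset hp)) (Ioo_subset_Icc_self.trans (hQ.Icc_subset hq)),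
      hdisj.inter_eq, image_empty]
  · rw [Finset.coe_image, sUnion_image, ← univ_subset_iff, ← hf.2.2, ← image_iUnion₂]
    exact image_mono hcover

theorem IsArcParam.injOn_image_Icc (hf : IsArcParam f) {Q : Finset (ℝ × ℝ)}
    (hQ : IsIntervalPacking Q (Icc 0 1)) : InjOn (fun p : ℝ × ℝ => f '' Icc p.1 p.2) Q := by
  intro p hp q hq hpq
  have hIcc := (hf.2.1.image_eq_image_iff (hQ.Icc_subset hp) (hQ.Icc_subset hq)).1 hpq
  have hle := (Icc_subset_Icc_iff (hQ.fst_lt_snd p hp).le).1 hIcc.subset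
  have hge := (Icc_subset_Icc_iff (hQ.fst_lt_snd q hq).le).1 hIcc.superset
  exact Prod.ext (hge.1.antisymm hle.1) (hle.2.antisymm hge.2)

theorem IsArcParam.sVariation_le_rpowVariationOn (hs : 0 < s) (hf : IsArcParam f) :
    sVariation X s ≤ rpowVariationOn s f (Icc 0 1) := by
  refine iSup₂_le fun P hP => ?_
  choose! u hu v hv huv hint hediam using fun A hA => (hP.1 A hA).exists_edist_eq_ediam hf
  calc ∑ A ∈ P, Metric.ediam A ^ s
      = ∑ A ∈ P, edist (f (u A)) (f (v A)) ^ s :=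
        Finset.sum_congr rfl fun A hA => by rw [hediam A hA]
    _ ≤ rpowVariationOn s f (Icc 0 1) :=
        rpowVariationOn.sum_le_of_pairwiseDisjoint hs hu hv huv fun A hA B hB hAB =>
          Ioc_disjoint_Ioc.2 (Ioo_disjoint_Ioo.1
            ((hP.2.1 hA hB hAB).mono (hint A hA) (hint B hB)).of_image)

theorem IsArcParam.rpowVariationOn_le_sVariation (hs : 0 ≤ s) (hf : IsArcParam f) :
    rpowVariationOn s f (Icc 0 1) ≤ sVariation X s := by
  classical
  refine iSup₂_le fun P hP => ?_
  obtain ⟨Q, hPQ, hQ, hcover⟩ := hP.exists_superset_cover one_pos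
  calc ∑ p ∈ P, edist (f p.1) (f p.2) ^ s
      ≤ ∑ p ∈ Q, edist (f p.1) (f p.2) ^ s := Finset.sum_le_sum_of_subset hPQ
    _ ≤ ∑ p ∈ Q, Metric.ediam (f '' Icc p.1 p.2) ^ s := by
        gcongr with p hp
        have hp' := (hQ.fst_lt_snd p hp).le
        exact Metric.edist_le_ediam_of_mem (mem_image_of_mem f (left_mem_Icc.2 hp'))
          (mem_image_of_mem f (right_mem_Icc.2 hp'))
    _ = ∑ A ∈ Q.image fun p => f '' Icc p.1 p.2, Metric.ediam A ^ s :=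
        (Finset.sum_image (f := fun A => Metric.ediam A ^ s) (hf.injOn_image_Icc hQ)).symm
    _ ≤ sVariation X s :=
        le_iSup₂ (f := fun (P : Finset (Set X)) (_ : IsArcPartition P) =>
          ∑ A ∈ P, Metric.ediam A ^ s) _ (hf.isArcPartition_image hQ hcover)

theorem IsArcParam.sVariation_eq_rpowVariationOn (hs : 0 < s) (hf : IsArcParam f) :
    sVariation X s = rpowVariationOn s f (Icc 0 1) :=
  (hf.sVariation_le_rpowVariationOn hs).antisymm (hf.rpowVariationOn_le_sVariation hs.le)

theorem IsMetricArc.nontrivial (hX : IsMetricArc X) : Nontrivial X := by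
  obtain ⟨f, hf⟩ := hX
  exact ⟨f 0, f 1, hf.2.1.ne (left_mem_Icc.2 zero_le_one) (right_mem_Icc.2 zero_le_one)
    zero_ne_one⟩

theorem sVariation_eq_zero_of_not_isMetricArc (hX : ¬ IsMetricArc X) : sVariation X s = 0 := by
  simp only [sVariation, ENNReal.iSup_eq_zero]
  refine fun P hP => Finset.sum_eq_zero fun A hA => ?_
  obtain ⟨g, _, _, hg, -⟩ := hP.1 A hA
  exact absurd ⟨g, hg⟩ hX

theorem IsArcParam.exists_isArcParam_image_Icc (hf : IsArcParam f) (hab : a < b)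
    (h01 : Icc a b ⊆ Icc 0 1) : ∃ g : ℝ → f '' Icc a b, IsArcParam g ∧
      EqOn (fun x => (g x : X)) (f ∘ AffineMap.lineMap a b) (Icc 0 1) := by
  have hline : AffineMap.lineMap a b '' Icc (0 : ℝ) 1 = Icc a b := by
    rw [← segment_eq_image_lineMap, segment_eq_Icc hab.le]
  have hmaps : MapsTo (AffineMap.lineMap a b) (Icc (0 : ℝ) 1) (Icc a b) :=
    mapsTo_iff_image_subset.2 hline.subset
  let g : ℝ → f '' Icc a b := IccExtend zero_le_one fun x : Icc (0 : ℝ) 1 =>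
    ⟨f (AffineMap.lineMap a b (x : ℝ)), mem_image_of_mem f (hmaps x.2)⟩
  have hg : EqOn (fun x => (g x : X)) (f ∘ AffineMap.lineMap a b) (Icc 0 1) := fun x hx =>
    congrArg Subtype.val (IccExtend_of_mem zero_le_one _ hx)
  refine ⟨g, ⟨?_, fun x hx y hy hxy => ?_, ?_⟩, hg⟩
  · refine IsInducing.subtypeVal.continuousOn_iff.2 (ContinuousOn.congr ?_ hg)
    exact (hf.1.mono h01).comp AffineMap.lineMap_continuous.continuousOn hmaps
  · refine AffineMap.lineMap_injective ℝ hab.ne (hf.2.1 (h01 (hmaps hx)) (h01 (hmaps hy)) ?_)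
    exact (hg hx).symm.trans ((congrArg Subtype.val hxy).trans (hg hy))
  · refine eq_univ_of_forall ?_
    rintro ⟨_, y, hy, rfl⟩
    obtain ⟨x, hx, rfl⟩ := hline.superset hy
    exact ⟨x, hx, Subtype.ext (hg hx)⟩

theorem IsArcParam.sVariation_image_Icc (hs : 0 < s) (hf : IsArcParam f) (hab : a ≤ b)
    (h01 : Icc a b ⊆ Icc 0 1) :
    sVariation (f '' Icc a b) s = rpowVariationOn s f (Icc a b) := by
  rcases hab.eq_or_lt with rfl | hlt
  /- A point is not an arc, so it has no partitions and `sVariation` is an empty supremum. -/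
  · have hsub : (Icc a a).Subsingleton := by simp
    have : ¬ IsMetricArc (f '' Icc a a) := fun h =>
      not_nontrivial_iff_subsingleton.2 (hsub.image f).coe_sort h.nontrivial
    rw [sVariation_eq_zero_of_not_isMetricArc this, rpowVariationOn.eq_zero_of_subsingleton hsub]
  obtain ⟨g, hg, hgf⟩ := hf.exists_isArcParam_image_Icc hlt h01
  calc sVariation (f '' Icc a b) s
      = rpowVariationOn s g (Icc 0 1) := hg.sVariation_eq_rpowVariationOn hs
    _ = rpowVariationOn s (fun x => (g x : X)) (Icc 0 1) := rfl
    _ = rpowVariationOn s (f ∘ AffineMap.lineMap a b) (Icc 0 1) := rpowVariationOn.congr hgf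
    _ = rpowVariationOn s f (AffineMap.lineMap a b '' Icc (0 : ℝ) 1) :=
        rpowVariationOn.comp_eq_of_monotoneOn hs ((AffineMap.lineMap_mono hab).monotoneOn _)
    _ = rpowVariationOn s f (Icc a b) := by
        rw [← segment_eq_image_lineMap, segment_eq_Icc hab]

end Arc

/-- If `s ≥ 1`, `X` is a metric arc with `‖X‖_{s-var} < ∞` and `f` is a homeomorphism
from `[0,1]` onto `X`, then `t ↦ ‖f([0,t])‖_{s-var}` is continuous on `[0,1]`. -/
theorem continuousOn_sVariation_initial_subarc (X : Type*) [MetricSpace X] (s : ℝ)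
    (hs : 1 ≤ s) (hfin : sVariation X s < ⊤) (f : ℝ → X) (hf : IsArcParam f) :
    ContinuousOn (fun t => sVariation (f '' Set.Icc 0 t) s) (Set.Icc (0:ℝ) 1) := by
  have hs0 : 0 < s := one_pos.trans_le hs
  have hfin' : rpowVariationOn s f (Icc 0 1) ≠ ⊤ := by
    rw [← hf.sVariation_eq_rpowVariationOn hs0]
    exact hfin.ne
  exact (rpowVariationOn.continuousOn_Icc_right hs hf.1 hfin').congr fun t ht =>
    hf.sVariation_image_Icc hs0 ht.1 (Icc_subset_Icc_right ht.2)
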